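/- arXiv:2305.15892 — 7 statements merged into one kernel-verified Lean document; each statement's English description precedes it below -/
import Mathlib

section
/- Let n ≥ 1 and let q, r be integers with 1 ≤ q ≤ r ≤ n. Let λ ∈ ℝⁿ satisfy λ_i = λ_1 for 1 ≤ i ≤ q, λ_i = λ_1 − 1 for q < i ≤ r, λ_1 − 2 ≥ λ_{r+1} ≥ ⋯ ≥ λ_n, and assume λ_i − λ_j ∈ ℤ for all i, j. Let ρ = (n, n−1, …, 1) ∈ ℝⁿ, and for 1 ≤ i ≤ q let s_i = 2(e_1 + ⋯ + e_i) be the i-th basic Schmid weight. Then ‖(λ − s_i)⁺ + ρ‖² ≥ ‖λ + ρ‖² holds if and only if λ_1 ≤ −n + (r+q−i+1)/2; moreover the inequality holds strictly if and only if λ_1 < −n + (r+q−i+1)/2. -/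
/-!
Write `a = λ₁`. Since every coordinate from index `r` on is at most `a − 2`, sorting `λ − s_i`
only moves the block of `i` lowered coordinates past the next `r − i` ones (`blockShift`).
The sorted vector is therefore `q − i` copies of `a`, then `r − q` copies of `a − 1`, then `i`
copies of `a − 2`, followed by the untouched tail of `λ`; it equals `(λ − s_i)⁺` because a vector
has only one decreasing rearrangement (`Tuple.unique_antitone`). Equivalently,
`(λ − s_i)⁺ = λ − 𝟙[q−i, q) − 𝟙[r−i, r)`, and lowering by one along these two windows of length `i`
changes the squared norm by two arithmetic progressions, so that
`‖(λ − s_i)⁺ + ρ‖² − ‖λ + ρ‖² = 4 i (−n + (r + q − i + 1) / 2 − a)`.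
As `i > 0`, both equivalences are read off from the sign of the right-hand side.
-/

/-- The underlying map of the permutation of indices sorting `λ − s_i`: with indices starting at
`0`, it sends the position `j` in the sorted vector to the index of a coordinate of `λ − s_i`
standing there. It cyclically rotates the first `r` indices by `i` and fixes the others. -/
def blockShift (n r i : ℕ) (hir : i ≤ r) (hrn : r ≤ n) (j : Fin n) : Fin n :=
  if h : (j : ℕ) < r - i then ⟨j + i, by omega⟩
  else if (j : ℕ) < r then ⟨j - (r - i), by omega⟩ else j

lemma blockShift_val (n r i : ℕ) (hir : i ≤ r) (hrn : r ≤ n) (j : Fin n) :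
    (blockShift n r i hir hrn j : ℕ) =
      if (j : ℕ) < r - i then (j : ℕ) + i else if (j : ℕ) < r then j - (r - i) else j := by
  unfold blockShift
  split_ifs <;> rfl

lemma blockShift_bijective (n r i : ℕ) (hir : i ≤ r) (hrn : r ≤ n) :
    Function.Bijective (blockShift n r i hir hrn) := by
  refine Finite.injective_iff_bijective.mp fun j k h => ?_
  have h' := congrArg Fin.val h
  rw [blockShift_val, blockShift_val] at h'
  apply Fin.ext
  split_ifs at h' <;> omega

lemma sum_window (n s i : ℕ) (h : s + i ≤ n) (f : ℕ → ℝ) :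
    (∑ j : Fin n, if s ≤ (j : ℕ) ∧ (j : ℕ) < s + i then f j else 0)
      = ∑ k ∈ Finset.range i, f (s + k) := by
  rw [Fin.sum_univ_eq_sum_range (fun j => if s ≤ j ∧ j < s + i then f j else 0) n,
    ← Finset.sum_filter]
  have : (Finset.range n).filter (fun j => s ≤ j ∧ j < s + i) = Finset.Ico s (s + i) := by
    ext j
    simp only [Finset.mem_filter, Finset.mem_range, Finset.mem_Ico]
    omega
  rw [this, Finset.sum_Ico_eq_sum_range, Nat.add_sub_cancel_left]

lemma sum_progression (i : ℕ) (c d : ℝ) :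
    ∑ k ∈ Finset.range i, (c + d * (k : ℝ)) = i * c + d * (i * (i - 1) / 2) := by
  induction i with
  | zero => simp
  | succ m ih =>
    rw [Finset.sum_range_succ, ih]
    push_cast
    ring


/-- For `sp(2n,ℝ)` with `ρ = (n, n−1, …, 1)` and the `i`-th basic Schmid weight
`s_i = 2(ε₁ + ⋯ + ε_i)` (`1 ≤ i ≤ q`): the Dirac inequality
`‖(λ − s_i)⁺ + ρ‖² ≥ ‖λ + ρ‖²` holds iff `λ₁ ≤ −n + (r+q−i+1)/2`, and it holds strictly
iff `λ₁ < −n + (r+q−i+1)/2`.  Here `mu` is the decreasing rearrangement `(λ − s_i)⁺`,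
characterized by being antitone and a coordinate permutation of `λ − s_i`. -/
theorem stmt_2 (n q r i : ℕ) (hn : 1 ≤ n) (hq : 1 ≤ q) (hqr : q ≤ r) (hrn : r ≤ n)
    (hi1 : 1 ≤ i) (hiq : i ≤ q)
    (lam : Fin n → ℝ)
    (h1 : ∀ j : Fin n, (j : ℕ) < q → lam j = lam ⟨0, by omega⟩)
    (h2 : ∀ j : Fin n, q ≤ (j : ℕ) → (j : ℕ) < r → lam j = lam ⟨0, by omega⟩ - 1)
    (h3 : ∀ j : Fin n, r ≤ (j : ℕ) → lam j ≤ lam ⟨0, by omega⟩ - 2)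
    (h4 : ∀ j k : Fin n, r ≤ (j : ℕ) → j ≤ k → lam k ≤ lam j)
    (hint : ∀ j k : Fin n, ∃ z : ℤ, lam j - lam k = (z : ℝ))
    (mu : Fin n → ℝ) (hmu : Antitone mu)
    (hperm : ∃ σ : Equiv.Perm (Fin n),
      (fun j : Fin n => lam j - (if (j : ℕ) < i then (2 : ℝ) else 0)) = mu ∘ σ) :
    ((∑ j : Fin n, (mu j + ((n : ℝ) - (j : ℕ))) ^ 2
        ≥ ∑ j : Fin n, (lam j + ((n : ℝ) - (j : ℕ))) ^ 2)
      ↔ lam ⟨0, by omega⟩ ≤ -(n : ℝ) + ((r : ℝ) + (q : ℝ) - (i : ℝ) + 1) / 2) ∧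
    ((∑ j : Fin n, (mu j + ((n : ℝ) - (j : ℕ))) ^ 2
        > ∑ j : Fin n, (lam j + ((n : ℝ) - (j : ℕ))) ^ 2)
      ↔ lam ⟨0, by omega⟩ < -(n : ℝ) + ((r : ℝ) + (q : ℝ) - (i : ℝ) + 1) / 2) := by
  have hir : i ≤ r := hiq.trans hqr
  set a := lam ⟨0, by omega⟩ with ha
  -- The sorted vector, written as `λ` lowered by one on each of the two windows of length `i`.
  set nu : Fin n → ℝ := fun j => lam j
    - (if q - i ≤ (j : ℕ) ∧ (j : ℕ) < q - i + i then 1 else 0)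
    - (if r - i ≤ (j : ℕ) ∧ (j : ℕ) < r - i + i then 1 else 0) with hnu
  have hval : ∀ j : Fin n, nu j =
      if (j : ℕ) < q - i then a else if (j : ℕ) < r - i then a - 1
      else if (j : ℕ) < r then a - 2 else lam j := by
    intro j
    have e1 := h1 j
    have e2 := h2 j
    simp only [hnu]
    by_cases hjq : (j : ℕ) < q
    · rw [e1 hjq]
      split_ifs <;> first | omega | ring
    · by_cases hjr : (j : ℕ) < r
      · rw [e2 (by omega) hjr]
        split_ifs <;> first | omega | ring
      · split_ifs <;> first | omega | ring
  have hanti : Antitone nu := by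
    intro j k hjk
    have hjk' : (j : ℕ) ≤ k := hjk
    have e3 := h3 k
    have e4 := h4 j k
    rw [hval j, hval k]
    split_ifs <;> first
      | omega
      | linarith
      | linarith [e3 (by omega)]
      | exact e4 (by omega) hjk
  have hmu_eq : mu = nu := by
    obtain ⟨σ, hσ⟩ := hperm
    set v : Fin n → ℝ := fun j => lam j - (if (j : ℕ) < i then (2 : ℝ) else 0) with hv
    set τ : Equiv.Perm (Fin n) := Equiv.ofBijective _ (blockShift_bijective n r i hir hrn) with hτ
    have hmuv : mu = v ∘ σ.symm := by
      funext j
      simp [hσ]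
    have hnuv : nu = v ∘ τ := by
      funext j
      have hb := blockShift_val n r i hir hrn j
      have e1 := h1 (blockShift n r i hir hrn j)
      have e2 := h2 (blockShift n r i hir hrn j)
      rw [hval j]
      change _ = v (blockShift n r i hir hrn j)
      simp only [hv]
      by_cases hj1 : (j : ℕ) < r - i
      · rw [if_pos hj1] at hb
        by_cases hj0 : (j : ℕ) < q - i
        · rw [e1 (by omega), if_pos hj0, if_neg (by omega), sub_zero]
        · rw [e2 (by omega) (by omega), if_neg hj0, if_pos hj1, if_neg (by omega), sub_zero]
      · rw [if_neg hj1] at hb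
        by_cases hj2 : (j : ℕ) < r
        · rw [if_pos hj2] at hb
          rw [e1 (by omega), if_neg (by omega), if_neg hj1, if_pos hj2, if_pos (by omega)]
        · rw [if_neg hj2] at hb
          rw [if_neg (by omega), if_neg hj1, if_neg hj2, if_neg (by omega), Fin.ext hb, sub_zero]
    rw [hmuv, hnuv]
    exact Tuple.unique_antitone (hmuv ▸ hmu) (hnuv ▸ hanti)
  have key : ∑ j : Fin n, (mu j + ((n : ℝ) - (j : ℕ))) ^ 2
      - ∑ j : Fin n, (lam j + ((n : ℝ) - (j : ℕ))) ^ 2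
      = 4 * i * (-(n : ℝ) + ((r : ℝ) + (q : ℝ) - (i : ℝ) + 1) / 2 - a) := by
    -- After lowering the first window, every coordinate in the second one equals `a - 1`.
    have hterm : ∀ j : Fin n,
        (mu j + ((n : ℝ) - (j : ℕ))) ^ 2 - (lam j + ((n : ℝ) - (j : ℕ))) ^ 2
        = (if q - i ≤ (j : ℕ) ∧ (j : ℕ) < q - i + i
            then (1 - 2 * (a + n - ((j : ℕ) : ℝ))) else 0)
        + (if r - i ≤ (j : ℕ) ∧ (j : ℕ) < r - i + i
            then (1 - 2 * (a - 1 + n - ((j : ℕ) : ℝ))) else 0) := by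
      intro j
      have e1 := h1 j
      have e2 := h2 j
      rw [hmu_eq]
      simp only [hnu]
      by_cases hjq : (j : ℕ) < q
      · rw [e1 hjq]
        split_ifs <;> first | omega | ring
      · by_cases hjr : (j : ℕ) < r
        · rw [e2 (by omega) hjr]
          split_ifs <;> first | omega | ring
        · split_ifs <;> first | omega | ring
    rw [← Finset.sum_sub_distrib, Finset.sum_congr rfl fun j _ => hterm j,
      Finset.sum_add_distrib,
      sum_window n (q - i) i (by omega) (fun j => 1 - 2 * (a + n - (j : ℝ))),
      sum_window n (r - i) i (by omega) (fun j => 1 - 2 * (a - 1 + n - (j : ℝ))),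
      ← Finset.sum_add_distrib]
    have hlin : ∀ k ∈ Finset.range i,
        (1 - 2 * (a + n - ((q - i + k : ℕ) : ℝ))) + (1 - 2 * (a - 1 + n - ((r - i + k : ℕ) : ℝ)))
        = (4 - 4 * a - 4 * n + 2 * (q + r) - 4 * i) + 4 * (k : ℝ) := by
      intro k _
      push_cast [Nat.cast_sub hiq, Nat.cast_sub hir]
      ring
    rw [Finset.sum_congr rfl hlin, sum_progression]
    ring
  have hi : (0 : ℝ) < 4 * i := by
    have : (0 : ℝ) < i := by exact_mod_cast hi1
    linarith
  constructor
  · rw [ge_iff_le, ← sub_nonneg, key, mul_nonneg_iff_of_pos_left hi, sub_nonneg]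
  · rw [gt_iff_lt, ← sub_pos, key, mul_pos_iff_of_pos_left hi, sub_pos]
end

section
/- Let n ≥ 2 and let λ ∈ ℝⁿ be weakly decreasing with λ_i − λ_j ∈ ℤ for all i, j. Suppose λ_1 > λ_2 and let q ∈ [2,n] be such that λ_2 = λ_3 = ⋯ = λ_q, and λ_q > λ_{q+1} if q < n. Let ρ = (n−1, n−2, …, 1, 0) ∈ ℝⁿ. Then: (a) the decreasing rearrangement of λ − e_1 − e_2 equals λ − e_1 − e_q; and (b) ‖(λ − e_1 − e_q) + ρ‖² ≥ ‖λ + ρ‖² holds if and only if λ_1 + λ_2 ≤ −2n + q + 2. -/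
/-!
For (a), the entries of `λ` at positions `2, …, q` coincide, so the transposition of positions `2`
and `q` carries `λ - e₁ - e₂` to `λ - e₁ - e_q`. The latter is weakly decreasing because entries of
`λ` differ by integers, so each strict drop `λ₁ > λ₂`, `λ_q > λ_{q+1}` is a drop by at least `1`.

For (b), only the squares at positions `1` and `q` change, and with `a = λ₁ + n - 1`,
`b = λ_q + n - q` the difference of squared norms is `(1 - 2a) + (1 - 2b)`. It is nonnegative iff
`a + b ≤ 1`, which is the asserted inequality since `λ_q = λ₂`.
-/

/-- A strict inequality between reals with integral difference is a gap of at least `1`. -/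
lemma add_one_le_of_lt_of_int_sub {x y : ℝ} (h : ∃ z : ℤ, x - y = (z : ℝ)) (hlt : y < x) :
    y + 1 ≤ x := by
  obtain ⟨z, hz⟩ := h
  have h0 : (0 : ℝ) < z := by linarith
  have hz0 : 0 < z := by exact_mod_cast h0
  have h1 : (1 : ℝ) ≤ z := by exact_mod_cast hz0
  linarith

/-- For `so*(2n)` with `ρ = (n−1, …, 1, 0)`, Case 1 (`λ₁ > λ₂`): (a) the decreasing
rearrangement of `λ − ε₁ − ε₂` is `λ − ε₁ − ε_q`; (b) the Dirac inequality
`‖(λ − ε₁ − ε_q) + ρ‖² ≥ ‖λ + ρ‖²` holds iff `λ₁ + λ₂ ≤ −2n + q + 2`. -/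
theorem stmt_5 (n q : ℕ) (hn : 2 ≤ n) (hq2 : 2 ≤ q) (hqn : q ≤ n)
    (lam : Fin n → ℝ) (hdec : Antitone lam)
    (hint : ∀ a b : Fin n, ∃ z : ℤ, lam a - lam b = (z : ℝ))
    (h12 : lam ⟨1, by omega⟩ < lam ⟨0, by omega⟩)
    (heq : ∀ i : Fin n, 1 ≤ (i : ℕ) → (i : ℕ) < q → lam i = lam ⟨1, by omega⟩)
    (hgt : ∀ hq' : q < n, lam ⟨q, by omega⟩ < lam ⟨q - 1, by omega⟩) :
    (Antitone (fun i : Fin n =>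
        lam i - (if (i : ℕ) = 0 then (1 : ℝ) else 0)
              - (if (i : ℕ) = q - 1 then (1 : ℝ) else 0)) ∧
     ∃ σ : Equiv.Perm (Fin n),
       (fun i : Fin n =>
           lam i - (if (i : ℕ) = 0 then (1 : ℝ) else 0)
                 - (if (i : ℕ) = 1 then (1 : ℝ) else 0))
         = (fun i : Fin n =>
             lam i - (if (i : ℕ) = 0 then (1 : ℝ) else 0)
                   - (if (i : ℕ) = q - 1 then (1 : ℝ) else 0)) ∘ σ) ∧
    ((∑ i : Fin n,
        (lam i - (if (i : ℕ) = 0 then (1 : ℝ) else 0)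
               - (if (i : ℕ) = q - 1 then (1 : ℝ) else 0)
               + ((n : ℝ) - 1 - (i : ℕ))) ^ 2
      ≥ ∑ i : Fin n, (lam i + ((n : ℝ) - 1 - (i : ℕ))) ^ 2)
      ↔ lam ⟨0, by omega⟩ + lam ⟨1, by omega⟩ ≤ -2 * (n : ℝ) + (q : ℝ) + 2) := by
  set i0 : Fin n := ⟨0, by omega⟩ with hi0
  set i1 : Fin n := ⟨1, by omega⟩ with hi1
  set p : Fin n := ⟨q - 1, by omega⟩ with hp
  have hlp : lam p = lam i1 := heq p (by simp only [hp]; omega) (by simp only [hp]; omega)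
  have e0 (i : Fin n) : (i : ℕ) = 0 ↔ i = i0 := by simp [Fin.ext_iff, hi0]
  have e1 (i : Fin n) : (i : ℕ) = 1 ↔ i = i1 := by simp [Fin.ext_iff, hi1]
  have ep (i : Fin n) : (i : ℕ) = q - 1 ↔ i = p := by simp [Fin.ext_iff, hp]
  have h0p : i0 ≠ p := by simp only [ne_eq, Fin.ext_iff, hi0, hp]; omega
  have h01 : i0 ≠ i1 := by simp [Fin.ext_iff, hi0, hi1]
  simp only [e0, e1, ep]
  refine ⟨⟨?_, Equiv.swap i1 p, ?_⟩, ?_⟩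
  · intro i j hij
    rcases hij.eq_or_lt with rfl | hlt
    · exact le_rfl
    have hlt' : (i : ℕ) < j := hlt
    have hm : lam j ≤ lam i := hdec hij
    have hj0 : j ≠ i0 := by rw [ne_eq, ← e0]; omega
    -- Subtracting indicators at `j` only helps, so only `i = i0` and `i = p` need a strict drop.
    have hjp : (0 : ℝ) ≤ if j = p then 1 else 0 := by split_ifs <;> norm_num
    by_cases hi : i = i0
    · have hj1 : lam j ≤ lam i1 := hdec (show 1 ≤ (j : ℕ) by omega)
      have := add_one_le_of_lt_of_int_sub (hint i0 i1) h12
      subst hi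
      simp only [if_neg hj0, if_neg h0p, if_true]
      linarith
    · by_cases hip : i = p
      · have hiv : (i : ℕ) = q - 1 := (ep i).2 hip
        have hq : q < n := by omega
        have hjq : lam j ≤ lam ⟨q, hq⟩ := hdec (show q ≤ (j : ℕ) by omega)
        have := add_one_le_of_lt_of_int_sub (hint p ⟨q, hq⟩) (hgt hq)
        simp only [if_neg hj0, hip, if_neg h0p.symm, if_true]
        linarith
      · simp only [if_neg hj0, if_neg hi, if_neg hip]
        linarith
  · funext i
    simp only [Function.comp_apply]
    by_cases h1 : i = i1
    · subst h1
      simp [Equiv.swap_apply_left, hlp, h01.symm, h0p.symm]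
    · by_cases h2 : i = p
      · subst h2
        simp [Equiv.swap_apply_right, hlp, h01.symm, h0p.symm, h1, Ne.symm h1]
      · simp [Equiv.swap_apply_of_ne_of_ne h1 h2, h1, h2]
  · have key : ∀ i : Fin n,
        (lam i - (if i = i0 then (1 : ℝ) else 0) - (if i = p then (1 : ℝ) else 0)
          + ((n : ℝ) - 1 - (i : ℕ))) ^ 2
        = (lam i + ((n : ℝ) - 1 - (i : ℕ))) ^ 2
          + (if i = i0 then 1 - 2 * (lam i + ((n : ℝ) - 1 - (i : ℕ))) else 0)
          + (if i = p then 1 - 2 * (lam i + ((n : ℝ) - 1 - (i : ℕ))) else 0) := by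
      intro i
      by_cases h : i = i0
      · have h' : i ≠ p := h ▸ h0p
        simp only [if_pos h, if_neg h']
        ring
      · by_cases h' : i = p
        · simp only [if_neg h, if_pos h']
          ring
        · simp only [if_neg h, if_neg h']
          ring
    simp only [key, Finset.sum_add_distrib, Finset.sum_ite_eq', Finset.mem_univ, if_true]
    have hv0 : ((i0 : ℕ) : ℝ) = 0 := by simp [hi0]
    have hvp : ((p : ℕ) : ℝ) = (q : ℝ) - 1 := by
      simp only [hp]
      push_cast [Nat.cast_sub (show 1 ≤ q by omega)]
      ring
    rw [hv0, hvp, hlp]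
    constructor <;> intro h <;> linarith
end

section
/- Let n ≥ 2 and let λ ∈ ℝⁿ be weakly decreasing with λ_i − λ_j ∈ ℤ for all i, j. Suppose λ_1 = λ_2 and let p ∈ [2,n] be such that λ_1 = λ_2 = ⋯ = λ_p, and λ_p > λ_{p+1} if p < n. Let ρ = (n−1, n−2, …, 1, 0) ∈ ℝⁿ. Then: (a) the decreasing rearrangement of λ − e_1 − e_2 equals λ − e_{p−1} − e_p; and (b) ‖(λ − e_{p−1} − e_p) + ρ‖² ≥ ‖λ + ρ‖² holds if and only if λ_1 ≤ −n + p. -/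
/-!
The first `p` coordinates of `λ` agree, so reversing them fixes `λ` and carries the positions
`1, 2` to `p, p − 1`; this is the required rearrangement. The vector `λ − e_{p−1} − e_p` is still
weakly decreasing because, by integrality, the strict drop after position `p` is at least `1`.
Only the coordinates `p − 1` and `p` contribute to the difference of the two squared norms,
which equals `-4 (λ₁ + n − p)`; this gives the Dirac inequality criterion.
-/


/-- For `so*(2n)` with `ρ = (n−1, …, 1, 0)`, Case 2 (`λ₁ = λ₂ = ⋯ = λ_p`): (a) the
decreasing rearrangement of `λ − ε₁ − ε₂` is `λ − ε_{p−1} − ε_p`; (b) the Dirac inequality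
`‖(λ − ε_{p−1} − ε_p) + ρ‖² ≥ ‖λ + ρ‖²` holds iff `λ₁ ≤ −n + p`. -/
theorem stmt_6 (n p : ℕ) (hn : 2 ≤ n) (hp2 : 2 ≤ p) (hpn : p ≤ n)
    (lam : Fin n → ℝ) (hdec : Antitone lam)
    (hint : ∀ a b : Fin n, ∃ z : ℤ, lam a - lam b = (z : ℝ))
    (heq : ∀ i : Fin n, (i : ℕ) < p → lam i = lam ⟨0, by omega⟩)
    (hgt : ∀ hp' : p < n, lam ⟨p, by omega⟩ < lam ⟨p - 1, by omega⟩) :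
    (Antitone (fun i : Fin n =>
        lam i - (if (i : ℕ) = p - 2 then (1 : ℝ) else 0)
              - (if (i : ℕ) = p - 1 then (1 : ℝ) else 0)) ∧
     ∃ σ : Equiv.Perm (Fin n),
       (fun i : Fin n =>
           lam i - (if (i : ℕ) = 0 then (1 : ℝ) else 0)
                 - (if (i : ℕ) = 1 then (1 : ℝ) else 0))
         = (fun i : Fin n =>
             lam i - (if (i : ℕ) = p - 2 then (1 : ℝ) else 0)
                   - (if (i : ℕ) = p - 1 then (1 : ℝ) else 0)) ∘ σ) ∧
    ((∑ i : Fin n,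
        (lam i - (if (i : ℕ) = p - 2 then (1 : ℝ) else 0)
               - (if (i : ℕ) = p - 1 then (1 : ℝ) else 0)
               + ((n : ℝ) - 1 - (i : ℕ))) ^ 2
      ≥ ∑ i : Fin n, (lam i + ((n : ℝ) - 1 - (i : ℕ))) ^ 2)
      ↔ lam ⟨0, by omega⟩ ≤ -(n : ℝ) + (p : ℝ)) := by
  refine ⟨⟨?_, ?_⟩, ?_⟩
  · intro i j hij
    have hle := hdec hij
    have hij' : (i : ℕ) ≤ j := hij
    by_cases hj : (j : ℕ) < p
    · have h1 := heq i (by omega)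
      have h2 := heq j hj
      dsimp only
      split_ifs <;> first | linarith | omega
    · by_cases hi : (i : ℕ) < p
      · have hjp : lam j ≤ lam ⟨p, by omega⟩ := hdec (show p ≤ (j : ℕ) by omega)
        have hlt := hgt (by omega)
        have h1 := heq i hi
        have h2 := heq ⟨p - 1, by omega⟩ (show p - 1 < p by omega)
        -- a positive integral difference is at least `1`
        have hgap : 1 ≤ lam i - lam j := by
          obtain ⟨z, hz⟩ := hint i j
          have hpos : (0 : ℝ) < (z : ℝ) := by linarith
          have hz1 : 1 ≤ z := by exact_mod_cast hpos
          rw [hz]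
          exact_mod_cast hz1
        dsimp only
        split_ifs <;> first | linarith | omega
      · dsimp only
        split_ifs <;> first | linarith | omega
  · -- reversal of the first `p` positions, an involution
    let f : Fin n → Fin n := fun i =>
      if h : (i : ℕ) < p then ⟨p - 1 - i, by omega⟩ else i
    have hf : ∀ i, ((f i : Fin n) : ℕ) = if (i : ℕ) < p then p - 1 - (i : ℕ) else i := by
      intro i
      by_cases h : (i : ℕ) < p <;> simp [f, h]
    have hinv : Function.Involutive f := by
      intro i
      apply Fin.ext
      rw [hf, hf]
      split_ifs <;> omega
    refine ⟨hinv.toPerm f, ?_⟩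
    funext i
    have hlam : lam (f i) = lam i := by
      by_cases h : (i : ℕ) < p
      · rw [heq i h, heq (f i) (by rw [hf, if_pos h]; omega)]
      · simp [f, h]
    simp only [Function.comp_apply, Function.Involutive.coe_toPerm, hlam, hf]
    split_ifs <;> first | linarith | omega
  · set a := lam ⟨0, by omega⟩ with ha
    let u : Fin n := ⟨p - 2, by omega⟩
    let v : Fin n := ⟨p - 1, by omega⟩
    have key : ∀ i : Fin n,
        (lam i - (if (i : ℕ) = p - 2 then (1 : ℝ) else 0)
               - (if (i : ℕ) = p - 1 then (1 : ℝ) else 0)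
               + ((n : ℝ) - 1 - (i : ℕ))) ^ 2
          = (lam i + ((n : ℝ) - 1 - (i : ℕ))) ^ 2
            + (if i = u then (1 - 2 * (a + (n - p + 1)) : ℝ) else 0)
            + (if i = v then (1 - 2 * (a + (n - p)) : ℝ) else 0) := by
      intro i
      have hu : i = u ↔ (i : ℕ) = p - 2 := Fin.ext_iff
      have hv : i = v ↔ (i : ℕ) = p - 1 := Fin.ext_iff
      simp only [hu, hv]
      by_cases h1 : (i : ℕ) = p - 2
      · have h2 : (i : ℕ) ≠ p - 1 := by omega
        have hc : ((i : ℕ) : ℝ) = p - 2 := by rw [h1, Nat.cast_sub hp2]; norm_num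
        rw [if_pos h1, if_neg h2, if_pos h1, if_neg h2, heq i (by omega), hc]
        ring
      · by_cases h2 : (i : ℕ) = p - 1
        · have hc : ((i : ℕ) : ℝ) = p - 1 := by
            rw [h2, Nat.cast_sub (by omega)]; norm_num
          rw [if_neg h1, if_pos h2, if_neg h1, if_pos h2, heq i (by omega), hc]
          ring
        · rw [if_neg h1, if_neg h2, if_neg h1, if_neg h2]
          ring
    rw [Finset.sum_congr rfl (fun i _ => key i), Finset.sum_add_distrib,
      Finset.sum_add_distrib, Finset.sum_ite_eq' Finset.univ u, Finset.sum_ite_eq' Finset.univ v,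
      if_pos (Finset.mem_univ _), if_pos (Finset.mem_univ _)]
    constructor <;> intro h <;> linarith
end

section
/- Let n ≥ 1, let μ, ν ∈ ℤⁿ be weakly decreasing, let σ, τ be permutations of {1,…,n}, and let ρ = (n, n−1, …, 1) ∈ ℝⁿ. Then ‖(σ·μ − τ·ν)⁺ + ρ‖² ≥ ‖(μ − ν)⁺ + ρ‖², where σ·μ denotes the vector with coordinates (σ·μ)_i = μ_{σ⁻¹(i)}. -/
/-!
Expanding the squares, `‖a + ρ‖² = ‖a‖² + 2⟨a, ρ⟩ + ‖ρ‖²`, so it suffices to show `‖b‖² ≤ ‖a‖²` and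
`⟨b, ρ⟩ ≤ ⟨a, ρ⟩`.

The first inequality is the rearrangement inequality `∑ μ (σ⁻¹ i) ν (τ⁻¹ i) ≤ ∑ μ i ν i`
(`sum_sq_sub_le`).

For the second, `⟨a, ρ⟩` is the sum of the partial sums `∑_{i ≤ k} a i` over all `k`
(`sum_mul_rho`), so it is enough that each partial sum of `b` is at most that of `a`. This follows
from the inequalities `∑ (b i - t)⁺ ≤ ∑ (a i - t)⁺`, by choosing `t = a k`
(`partial_sum_le`). For integer `t` these hold because `(x - y)⁺` counts the integers `s` with
`y ≤ s < x`, and for fixed `s` the indicators of `s < μ i` and `ν i + t ≤ s` vary oppositely in `i`,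
so that rearrangement can only increase the sum of their products (`sum_posPart_le`).
-/

/-- The rearrangement inequality for an antivarying pair, with both functions permuted. -/
lemma sum_mul_le_of_antivary {n : ℕ} {f g : Fin n → ℤ} (h : Antivary f g)
    (σ τ : Equiv.Perm (Fin n)) :
    ∑ i, f i * g i ≤ ∑ i, f (σ⁻¹ i) * g (τ⁻¹ i) := by
  have h1 := h.sum_mul_le_sum_comp_perm_mul (σ := τ.trans σ⁻¹)
  have h2 := Equiv.sum_comp τ (fun i => f (σ⁻¹ i) * g (τ⁻¹ i))
  rw [← h2]
  simpa using h1

lemma posPart_eq_sum {L U x y : ℤ} (hL : L ≤ y) (hU : x ≤ U) :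
    max (x - y) 0 =
      ∑ s ∈ Finset.Ico L U, (if s < x then 1 else 0) * (if y ≤ s then (1 : ℤ) else 0) := by
  have h : (Finset.Ico L U).filter (fun s => y ≤ s ∧ s < x) = Finset.Ico y x := by
    ext s
    simp only [Finset.mem_filter, Finset.mem_Ico]
    omega
  have h2 : ∀ s : ℤ, (if s < x then 1 else 0) * (if y ≤ s then (1 : ℤ) else 0) =
      if y ≤ s ∧ s < x then 1 else 0 := by
    intro s
    split_ifs <;> simp_all
  simp only [h2]
  rw [← Finset.sum_filter, h]
  simp

/-- The convex functions `x ↦ (x - t)⁺`, summed over the coordinates of the difference, are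
smallest when both vectors are sorted the same way. -/
lemma sum_posPart_le {n : ℕ} {mu nu : Fin n → ℤ} (hmu : Antitone mu) (hnu : Antitone nu)
    (σ τ : Equiv.Perm (Fin n)) (t : ℤ) :
    ∑ i, max (mu i - nu i - t) 0 ≤ ∑ i, max (mu (σ⁻¹ i) - nu (τ⁻¹ i) - t) 0 := by
  obtain ⟨U, hU⟩ := (Set.finite_range mu).bddAbove
  obtain ⟨L, hL⟩ := (Set.finite_range (fun i => nu i + t)).bddBelow
  have hU' : ∀ i, mu i ≤ U := fun i => hU ⟨i, rfl⟩
  have hL' : ∀ i, L ≤ nu i + t := fun i => hL ⟨i, rfl⟩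
  have key : ∀ i j, max (mu i - nu j - t) 0 = ∑ s ∈ Finset.Ico L U,
      (if s < mu i then 1 else 0) * (if nu j + t ≤ s then (1 : ℤ) else 0) := by
    intro i j
    rw [← posPart_eq_sum (hL' j) (hU' i), sub_sub]
  simp only [key]
  rw [Finset.sum_comm, Finset.sum_comm (s := Finset.univ)]
  refine Finset.sum_le_sum fun s _ => ?_
  refine sum_mul_le_of_antivary (f := fun i => if s < mu i then 1 else 0)
    (g := fun i => if nu i + t ≤ s then 1 else 0) ?_ σ τ
  refine Antitone.antivary (fun i j hij => ?_) (fun i j hij => ?_)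
  · have := hmu hij
    split_ifs <;> omega
  · have := hnu hij
    split_ifs <;> omega

lemma sum_sq_sub_le {n : ℕ} {mu nu : Fin n → ℤ} (hmu : Antitone mu) (hnu : Antitone nu)
    (σ τ : Equiv.Perm (Fin n)) :
    ∑ i, (mu i - nu i) ^ 2 ≤ ∑ i, (mu (σ⁻¹ i) - nu (τ⁻¹ i)) ^ 2 := by
  have h := sum_mul_le_of_antivary (f := mu) (g := fun i => -nu i)
    (hmu.antivary (fun i j hij => neg_le_neg (hnu hij))) σ τ
  have h1 := Equiv.sum_comp σ⁻¹ (fun i => mu i ^ 2)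
  have h2 := Equiv.sum_comp τ⁻¹ (fun i => nu i ^ 2)
  have e : ∀ x y : ℤ, (x - y) ^ 2 = x ^ 2 + y ^ 2 + 2 * (x * -y) := fun x y => by ring
  simp only [e, Finset.sum_add_distrib, ← Finset.mul_sum]
  linarith

lemma sum_mul_rho {n : ℕ} (a : Fin n → ℝ) :
    ∑ i : Fin n, a i * ((n : ℝ) - (i : ℕ)) = ∑ k : Fin n, ∑ i ∈ Finset.Iic k, a i := by
  have h : ∀ k : Fin n, ∑ i ∈ Finset.Iic k, a i = ∑ i, if i ≤ k then a i else 0 := by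
    intro k
    rw [← Finset.sum_filter]
    congr 1
    ext i
    simp
  simp only [h]
  rw [Finset.sum_comm]
  refine Finset.sum_congr rfl fun i _ => ?_
  have h2 : Finset.univ.filter (fun k => i ≤ k) = Finset.Ici i := by
    ext k
    simp
  rw [← Finset.sum_filter, h2, Finset.sum_const, Fin.card_Ici, nsmul_eq_mul,
    Nat.cast_sub i.2.le, mul_comm]

/-- The sum of the largest entries of `a` is recovered from `∑ (a i - t)⁺` at `t = a k`. -/
lemma partial_sum_le {n : ℕ} {a b : Fin n → ℝ} (ha : Antitone a) (k : Fin n)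
    (h : ∑ i, max (b i - a k) 0 ≤ ∑ i, max (a i - a k) 0) :
    ∑ i ∈ Finset.Iic k, b i ≤ ∑ i ∈ Finset.Iic k, a i := by
  have h1 : ∑ i ∈ Finset.Iic k, (b i - a k) ≤ ∑ i, max (b i - a k) 0 :=
    (Finset.sum_le_sum fun i _ => le_max_left _ _).trans
      (Finset.sum_le_sum_of_subset_of_nonneg (Finset.subset_univ _)
        fun i _ _ => le_max_right _ _)
  have h2 : ∑ i, max (a i - a k) 0 = ∑ i ∈ Finset.Iic k, (a i - a k) := by
    rw [← Finset.sum_subset (Finset.subset_univ (Finset.Iic k))]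
    · refine Finset.sum_congr rfl fun i hi => max_eq_left ?_
      exact sub_nonneg.2 (ha (Finset.mem_Iic.1 hi))
    · intro i _ hi
      refine max_eq_right (sub_nonpos.2 (ha ?_))
      exact (not_le.1 fun h => hi (Finset.mem_Iic.2 h)).le
  have h3 := h1.trans (h.trans h2.le)
  simp only [Finset.sum_sub_distrib] at h3
  linarith

/-- Generalized PRV inequality for `(sp(2n,ℝ), u(n))`: for weakly decreasing integer
vectors `μ, ν` and permutations `σ, τ` of the coordinates,
`‖(σ·μ − τ·ν)⁺ + ρ‖² ≥ ‖(μ − ν)⁺ + ρ‖²`, where `ρ = (n, n−1, …, 1)`.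
Here `a = (σ·μ − τ·ν)⁺` and `b = (μ − ν)⁺` are the decreasing rearrangements,
characterized by being antitone coordinate permutations of the respective vectors. -/
theorem stmt_7 (n : ℕ) (hn : 1 ≤ n) (mu nu : Fin n → ℤ)
    (hmu : Antitone mu) (hnu : Antitone nu)
    (σ τ : Equiv.Perm (Fin n))
    (a b : Fin n → ℝ) (ha : Antitone a) (hb : Antitone b)
    (haperm : ∃ π : Equiv.Perm (Fin n),
      (fun i : Fin n => ((mu (σ⁻¹ i) : ℝ) - (nu (τ⁻¹ i) : ℝ))) = a ∘ π)
    (hbperm : ∃ π : Equiv.Perm (Fin n),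
      (fun i : Fin n => ((mu i : ℝ) - (nu i : ℝ))) = b ∘ π) :
    ∑ i : Fin n, (a i + ((n : ℝ) - (i : ℕ))) ^ 2
      ≥ ∑ i : Fin n, (b i + ((n : ℝ) - (i : ℕ))) ^ 2 := by
  obtain ⟨p, hp⟩ := haperm
  obtain ⟨q, hq⟩ := hbperm
  have sa : ∀ F : ℝ → ℝ, ∑ i, F (a i) = ∑ i, F ((mu (σ⁻¹ i) : ℝ) - (nu (τ⁻¹ i) : ℝ)) := by
    intro F
    rw [← Equiv.sum_comp p]
    exact Finset.sum_congr rfl fun i _ => congrArg F (congrFun hp i).symm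
  have sb : ∀ F : ℝ → ℝ, ∑ i, F (b i) = ∑ i, F ((mu i : ℝ) - (nu i : ℝ)) := by
    intro F
    rw [← Equiv.sum_comp q]
    exact Finset.sum_congr rfl fun i _ => congrArg F (congrFun hq i).symm
  have hsq : ∑ i, b i ^ 2 ≤ ∑ i, a i ^ 2 := by
    rw [sa (fun x => x ^ 2), sb (fun x => x ^ 2)]
    exact_mod_cast sum_sq_sub_le hmu hnu σ τ
  have hrho : ∑ i : Fin n, b i * ((n : ℝ) - (i : ℕ)) ≤ ∑ i : Fin n, a i * ((n : ℝ) - (i : ℕ)) := by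
    rw [sum_mul_rho, sum_mul_rho]
    refine Finset.sum_le_sum fun k _ => partial_sum_le ha k ?_
    -- The threshold `a k` is an integer, being an entry of `σ·μ − τ·ν`.
    obtain ⟨t, ht⟩ : ∃ t : ℤ, a k = t := by
      refine ⟨mu (σ⁻¹ (p.symm k)) - nu (τ⁻¹ (p.symm k)), ?_⟩
      have := congrFun hp (p.symm k)
      simp only [Function.comp_apply, Equiv.apply_symm_apply] at this
      rw [← this]
      push_cast
      rfl
    rw [ht, sa (fun x => max (x - t) 0), sb (fun x => max (x - t) 0)]
    exact_mod_cast sum_posPart_le hmu hnu σ τ t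
  simp only [add_sq, Finset.sum_add_distrib, mul_assoc, ← Finset.mul_sum]
  linarith
end

section
/- Let Λ ∈ ℝⁿ and let 1 ≤ q < r ≤ n be integers such that Λ_{i+1} = Λ_i − 1 for 1 ≤ i < q, Λ_{q+1} = Λ_q − 2, and Λ_{i+1} = Λ_i − 1 for q < i < r. Assume that 2Λ_i ∈ ℤ and Λ_i − Λ_j ∈ ℤ for all i, j, that Λ_i ≠ 0 for all i, and that there are no indices i, j with Λ_i = 1/2 and Λ_j = −1/2. Then Λ_1 ≤ (q+r)/2 holds if and only if Λ_q ≤ 3/2. -/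
/-! Write `m = Λ_q` and `s = r - q ≥ 1`. The first string gives `Λ₁ = m + q - 1`, so unitarity says
`m ≤ 1 + s / 2`, which follows from `m ≤ 3 / 2`. Conversely, if `3 / 2 < m ≤ 1 + s / 2`, then the
second string `m - 2, m - 3, …, m - 1 - s` starts at a value `> -1 / 2` and ends at a value
`≤ -s / 2 ≤ -1 / 2`. Hence it contains `0` when `m` is an integer, and both `1 / 2` and `-1 / 2`
when `m` is a half-integer; both are excluded. -/


/-- For an integral or half-integral parameter `Λ` of `sp(2n,ℝ)` with `q < r`, with no
coordinate equal to 0 and no pair of coordinates equal to `1/2` and `−1/2`: the unitarity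
condition `Λ₁ ≤ (q+r)/2` holds iff `Λ_q ≤ 3/2`. -/
theorem stmt_12 (n q r : ℕ) (hq : 1 ≤ q) (hqr : q < r) (hrn : r ≤ n)
    (Λ : Fin n → ℝ)
    (hstr1 : ∀ i : ℕ, ∀ hi : i + 1 < q, Λ ⟨i + 1, by omega⟩ = Λ ⟨i, by omega⟩ - 1)
    (hgap : Λ ⟨q, by omega⟩ = Λ ⟨q - 1, by omega⟩ - 2)
    (hstr2 : ∀ i : ℕ, ∀ hi1 : q ≤ i, ∀ hi2 : i + 1 < r,
      Λ ⟨i + 1, by omega⟩ = Λ ⟨i, by omega⟩ - 1)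
    (hhalf : ∀ i : Fin n, ∃ z : ℤ, 2 * Λ i = (z : ℝ))
    (hint : ∀ i j : Fin n, ∃ z : ℤ, Λ i - Λ j = (z : ℝ))
    (hnz : ∀ i : Fin n, Λ i ≠ 0)
    (hnohalf : ¬ ∃ i j : Fin n, Λ i = 1 / 2 ∧ Λ j = -(1 / 2)) :
    Λ ⟨0, by omega⟩ ≤ ((q : ℝ) + (r : ℝ)) / 2 ↔ Λ ⟨q - 1, by omega⟩ ≤ 3 / 2 := by
  have h1 : ∀ i : ℕ, ∀ hi : i < q, Λ ⟨i, by omega⟩ = Λ ⟨0, by omega⟩ - (i : ℝ) := by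
    intro i
    induction i with
    | zero => intro hi; simp
    | succ k ih =>
      intro hi
      rw [hstr1 k hi, ih (by omega)]
      push_cast
      ring
  have h2 : ∀ j : ℕ, ∀ hj : q + j < r,
      Λ ⟨q + j, by omega⟩ = Λ ⟨q - 1, by omega⟩ - 2 - (j : ℝ) := by
    intro j
    induction j with
    | zero => intro hj; simpa using hgap
    | succ k ih =>
      intro hj
      have h := hstr2 (q + k) (by omega) (by omega)
      rw [ih (by omega)] at h
      refine h.trans ?_
      push_cast
      ring
  have hfirst := h1 (q - 1) (by omega)
  rw [Nat.cast_sub hq, Nat.cast_one] at hfirst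
  have hqr' : (q : ℝ) + 1 ≤ r := by exact_mod_cast hqr
  obtain ⟨z, hz⟩ := hhalf ⟨q - 1, by omega⟩
  constructor
  · intro hle
    by_contra! hlt
    have hz_lower : 3 < z := by
      have : (3 : ℝ) < z := by linarith
      exact_mod_cast this
    have hz_upper : z ≤ 2 + (r - q : ℤ) := by
      have : (z : ℝ) ≤ 2 + (r - q) := by linarith
      exact_mod_cast this
    obtain ⟨k, hk | hk⟩ := Int.even_or_odd' z
    · -- The entry of the second string at offset `k - 2` is `m - k = 0`.
      obtain ⟨j, rfl⟩ : ∃ j : ℕ, k = j + 2 := ⟨(k - 2).toNat, by omega⟩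
      refine hnz ⟨q + j, by omega⟩ ?_
      rw [h2 j (by omega)]
      rw [hk] at hz
      push_cast at hz
      linarith
    · -- The entries at offsets `k - 2` and `k - 1` are `m - k = 1 / 2` and `m - k - 1 = -1 / 2`.
      obtain ⟨j, rfl⟩ : ∃ j : ℕ, k = j + 2 := ⟨(k - 2).toNat, by omega⟩
      rw [hk] at hz
      push_cast at hz
      refine hnohalf ⟨⟨q + j, by omega⟩, ⟨q + (j + 1), by omega⟩, ?_, ?_⟩
      · rw [h2 j (by omega)]
        linarith
      · rw [h2 (j + 1) (by omega)]
        push_cast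
        linarith
  · intro hle
    linarith
end

section
/- Let n ≥ 1 and let Λ ∈ ℤⁿ be strictly decreasing such that the multiset {|Λ_1|, …, |Λ_n|} equals {1, 2, …, n} (so Λ is a Weyl group conjugate of ρ = (n, n−1, …, 1) that is dominant regular for k). Define q(Λ) as the largest k ≤ n with Λ_i = Λ_1 − i + 1 for all 1 ≤ i ≤ k, and define r(Λ) = q(Λ) if q(Λ) = n or Λ_{q(Λ)+1} ≠ Λ_{q(Λ)} − 2, and otherwise r(Λ) = q(Λ) + m where m is the largest k ≤ n − q(Λ) with Λ_{q(Λ)+i} = Λ_{q(Λ)+1} − i + 1 for all 1 ≤ i ≤ k. Then Λ_1 ≤ (q(Λ) + r(Λ))/2 holds if and only if either Λ = (−1, −2, …, −n) or there exists an integer q' with 1 ≤ q' ≤ n such that Λ = (q', q'−1, …, 1, −q'−1, −q'−2, …, −n). -/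
/-!
Write `a = L 0`, `q = qOf n L`, `r = rOf n L`. The values of `L` on `{0, …, n-1}` avoid `0`, so a
string descending by `1` cannot pass from positive to negative values.

* If `a < 0`, all values are negative, hence `L` is `-1, …, -n`, and the inequality is trivial.
* If `a > 0`, the first string stays positive, so `q ≤ a`. If `q < a`, then the inequality forces
  `r > a`, so the second string exists and descends from `a - q - 1 ≥ 0` to `a - r < 0`, hence
  meets `0`: impossible. So `q = a`, the first `a` values are `a, …, 1`, and the remaining ones,
  being negative and decreasing with absolute values in `{a+1, …, n}`, are `-(a+1), …, -n`
  (`tail_eq`).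

Conversely, for the listed parameters `L 0 ≤ q ≤ r`.
-/

/-- `qOf n L` is the largest `k ≤ n` such that the first `k` coordinates of `L`
(0-indexed: `L 0, …, L (k−1)`) form a string descending by 1, i.e. `L i = L 0 − i`
for all `i < k`. -/
def qOf (n : ℕ) (L : ℕ → ℤ) : ℕ :=
  Nat.findGreatest (fun k => ∀ i < k, L i = L 0 - i) n

/-- `rOf n L` equals `qOf n L` when `qOf n L = n` or the next coordinate does not drop by
exactly 2; otherwise it extends `qOf n L` by the length of the maximal string descending
by 1 starting at position `qOf n L`. -/
def rOf (n : ℕ) (L : ℕ → ℤ) : ℕ :=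
  if qOf n L = n ∨ L (qOf n L) ≠ L (qOf n L - 1) - 2 then qOf n L
  else qOf n L +
    Nat.findGreatest (fun k => ∀ i < k, L (qOf n L + i) = L (qOf n L) - i) (n - qOf n L)

/-- Strict decrease of an integer sequence forces gaps at least as large as index differences. -/
lemma gap_of_decreasing (n : ℕ) (L : ℕ → ℤ) (hdec : ∀ i j : ℕ, i < j → j < n → L j < L i)
    (i d : ℕ) (h : i + d < n) : L (i + d) + d ≤ L i := by
  induction d with
  | zero => simp
  | succ d ih =>
    have h1 := ih (by omega)
    have h2 := hdec (i + d) (i + (d + 1)) (by omega) h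
    push_cast
    omega

/-- `n - a` decreasing integers in `[-n, -(a+1)]` leave no freedom. -/
lemma tail_eq (n : ℕ) (L : ℕ → ℤ) (hdec : ∀ i j : ℕ, i < j → j < n → L j < L i)
    (hlow : ∀ i < n, -(n : ℤ) ≤ L i) (a : ℕ) (ha : a < n → L a ≤ -((a : ℤ) + 1))
    (i : ℕ) (hai : a ≤ i) (hi : i < n) : L i = -((i : ℤ) + 1) := by
  obtain ⟨d, rfl⟩ := Nat.exists_eq_add_of_le hai
  obtain ⟨e, rfl⟩ := Nat.exists_eq_add_of_lt hi
  have h1 := gap_of_decreasing _ L hdec a d hi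
  have h2 := gap_of_decreasing _ L hdec (a + d) e (by omega)
  have h3 := hlow (a + d + e) (by omega)
  have h4 := ha (by omega)
  push_cast at *
  omega

lemma qOf_le_rOf (n : ℕ) (L : ℕ → ℤ) : qOf n L ≤ rOf n L := by
  unfold rOf
  split_ifs <;> omega

lemma qOf_spec (n : ℕ) (L : ℕ → ℤ) : ∀ i < qOf n L, L i = L 0 - i :=
  Nat.findGreatest_spec (P := fun k => ∀ i < k, L i = L 0 - i) (Nat.zero_le n) (by simp)

lemma le_qOf (n : ℕ) (L : ℕ → ℤ) (k : ℕ) (hk : k ≤ n) (h : ∀ i < k, L i = L 0 - i) :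
    k ≤ qOf n L :=
  Nat.le_findGreatest (P := fun k => ∀ i < k, L i = L 0 - i) hk h

/-- If `r` differs from `q`, then `r - q` is the length of a string starting two below `L (q-1)`. -/
lemma rOf_spec (n : ℕ) (L : ℕ → ℤ) : rOf n L = qOf n L ∨
    (L (qOf n L) = L (qOf n L - 1) - 2 ∧ ∃ m, rOf n L = qOf n L + m ∧ qOf n L + m ≤ n ∧
      ∀ i < m, L (qOf n L + i) = L (qOf n L) - i) := by
  have hq : qOf n L ≤ n := Nat.findGreatest_le n
  unfold rOf
  split_ifs with h
  · exact Or.inl rfl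
  · push Not at h
    refine Or.inr ⟨h.2, _, rfl, ?_, ?_⟩
    · have := Nat.findGreatest_le
        (P := fun k => ∀ i < k, L (qOf n L + i) = L (qOf n L) - i) (n - qOf n L)
      omega
    · exact Nat.findGreatest_spec
        (P := fun k => ∀ i < k, L (qOf n L + i) = L (qOf n L) - i) (Nat.zero_le _) (by simp)

/-- For `Sp(2n,ℝ)`: a strictly decreasing integer parameter `Λ` (indexed `L 0, …, L (n−1)`)
whose absolute values form the multiset `{1, …, n}` (a `k`-dominant Weyl conjugate of
`ρ = (n, …, 1)`) satisfies the unitarity condition `Λ₁ ≤ (q(Λ)+r(Λ))/2` iff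
`Λ = (−1, −2, …, −n)` or `Λ = (q', q'−1, …, 1, −q'−1, …, −n)` for some `1 ≤ q' ≤ n`. -/
theorem stmt_13 (n : ℕ) (hn : 1 ≤ n) (L : ℕ → ℤ)
    (hdec : ∀ i j : ℕ, i < j → j < n → L j < L i)
    (habs : (Multiset.range n).map (fun i => |L i|)
      = (Multiset.range n).map (fun i => (i : ℤ) + 1)) :
    ((L 0 : ℝ) ≤ ((qOf n L : ℝ) + (rOf n L : ℝ)) / 2)
      ↔ ((∀ i < n, L i = -((i : ℤ) + 1)) ∨
          ∃ q' : ℕ, 1 ≤ q' ∧ q' ≤ n ∧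
            ∀ i < n, L i = if i < q' then (q' : ℤ) - i else -((i : ℤ) + 1)) := by
  have hineq : ((L 0 : ℝ) ≤ ((qOf n L : ℝ) + (rOf n L : ℝ)) / 2) ↔
      2 * L 0 ≤ (qOf n L : ℤ) + rOf n L := by
    rw [le_div_iff₀ (by norm_num), mul_comm]
    norm_cast
  rw [hineq]
  -- the coercion of `Multiset.range n` to integers elaborates to a monadic bind, i.e. a `map`
  have habs' : (Multiset.range n).map (fun i => |L i|)
      = (Multiset.range n).map (fun i : ℕ => (i : ℤ) + 1) := by
    rw [habs]
    simp only [Multiset.bind_def, Multiset.pure_def, Multiset.bind_singleton, Multiset.map_map,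
      Function.comp_def]
  have hrange : ∀ i < n, 1 ≤ |L i| ∧ |L i| ≤ n := by
    intro i hi
    have h : |L i| ∈ (Multiset.range n).map (fun i => |L i|) :=
      Multiset.mem_map.2 ⟨i, Multiset.mem_range.2 hi, rfl⟩
    rw [habs', Multiset.mem_map] at h
    obtain ⟨j, hj, h⟩ := h
    rw [Multiset.mem_range] at hj
    omega
  have hinj : ∀ i < n, ∀ j < n, |L i| = |L j| → i = j := by
    have hnd : ((Multiset.range n).map (fun i => |L i|)).Nodup := by
      rw [habs']
      exact (Multiset.nodup_range n).map (fun i j h => by simpa using h)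
    intro i hi j hj h
    exact Multiset.inj_on_of_nodup_map hnd i (Multiset.mem_range.2 hi) j
      (Multiset.mem_range.2 hj) h
  have hne : ∀ i < n, L i ≠ 0 := by
    intro i hi h
    have := (hrange i hi).1
    simp [h] at this
  have hlow : ∀ i < n, -(n : ℤ) ≤ L i := fun i hi => (abs_le.1 (hrange i hi).2).1
  have hqn : qOf n L ≤ n := Nat.findGreatest_le n
  have hqr := qOf_le_rOf n L
  constructor
  · intro h
    rcases lt_or_gt_of_ne (hne 0 (by omega)) with h0 | h0
    · left
      intro i hi
      exact tail_eq n L hdec hlow 0 (fun _ => by push_cast; omega) i (Nat.zero_le i) hi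
    · right
      obtain ⟨a, ha⟩ := Int.eq_ofNat_of_zero_le h0.le
      have hqs := qOf_spec n L
      have hq1 : 1 ≤ qOf n L := le_qOf n L 1 hn (by intro i hi; simp [Nat.lt_one_iff.1 hi])
      have hqa : qOf n L ≤ a := by
        by_contra! hlt
        exact hne a (by omega) (by rw [hqs a hlt]; omega)
      have haq : a = qOf n L := by
        by_contra hna
        rcases rOf_spec n L with hr | ⟨h2, m, hr, hmn, hm⟩
        · omega
        · have h3 := hqs (qOf n L - 1) (by omega)
          -- the second string would take the value `0` at index `a - 1`
          have h4 := hm (a - qOf n L - 1) (by omega)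
          exact hne (qOf n L + (a - qOf n L - 1)) (by omega) (by rw [h4]; omega)
      refine ⟨a, by omega, by omega, fun i hi => ?_⟩
      split_ifs with hia
      · rw [hqs i (by omega), ha]
      · refine tail_eq n L hdec hlow a (fun han => ?_) i (by omega) hi
        have h5 := hdec (a - 1) a (by omega) han
        have h6 := hqs (a - 1) (by omega)
        have h7 := hne a han
        by_contra! hlt
        -- `|L a|` lies in `{1, …, a}`, so it is already attained at index `a - |L a|`
        obtain ⟨k, hk⟩ := Int.eq_ofNat_of_zero_le (show 0 ≤ -L a by omega)
        have h8 := hqs (a - k) (by omega)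
        have h9 : L (a - k) = k := by omega
        have h10 := hinj (a - k) (by omega) a han (by
          rw [h9, show L a = -(k : ℤ) by omega, abs_neg])
        omega
  · rintro (h | ⟨q', h1, h2, h⟩)
    · have := h 0 (by omega)
      push_cast at this
      omega
    · have h0 : L 0 = q' := by
        rw [h 0 (by omega), if_pos (by omega)]
        simp
      have := le_qOf n L q' h2 (fun i hi => by rw [h i (by omega), if_pos hi, h0])
      omega
end

section
/- Let m ≥ 0 be an integer and let P_m = Σ_{i=0}^{⌊m/2⌋} (−1)^i · binom(m, 2i) · X^{m−2i} · Y^{2i}, a polynomial in two variables X, Y over ℤ (equivalently over ℂ). Then P_m is harmonic: ∂²P_m/∂X² + ∂²P_m/∂Y² = 0. -/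
/-!
The Laplacian of `P_m` telescopes: since
`binom(m, k+2) (k+2) (k+1) = binom(m, k) (m-k) (m-k-1)`, the second `Y`-derivative of the
`(i+1)`-st term is the negative of the second `X`-derivative of the `i`-th term. What remains is the
second `Y`-derivative of the term `i = 0` and the second `X`-derivative of the term `i = ⌊m/2⌋`; both
vanish, as these terms have degree `0` in `Y` and degree at most `1` in `X`, respectively.
-/

open MvPolynomial

/-- The polynomial `P_m = Σ_{i=0}^{⌊m/2⌋} (−1)^i binom(m,2i) X^{m−2i} Y^{2i}` in two
variables `X = X 0`, `Y = X 1` over `ℤ`. -/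
noncomputable def weilSingularPoly (m : ℕ) : MvPolynomial (Fin 2) ℤ :=
  ∑ i ∈ Finset.range (m / 2 + 1),
    C ((-1) ^ i * (m.choose (2 * i) : ℤ)) * X 0 ^ (m - 2 * i) * X 1 ^ (2 * i)

lemma pderiv_zero_twice (c : ℤ) (a b : ℕ) :
    pderiv 0 (pderiv 0 (C c * X 0 ^ a * X 1 ^ b : MvPolynomial (Fin 2) ℤ))
      = C (c * (a * (a - 1 : ℕ) : ℕ)) * X 0 ^ (a - 2) * X 1 ^ b := by
  simp [Nat.sub_sub]
  ring

lemma pderiv_one_twice (c : ℤ) (a b : ℕ) :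
    pderiv 1 (pderiv 1 (C c * X 0 ^ a * X 1 ^ b : MvPolynomial (Fin 2) ℤ))
      = C (c * (b * (b - 1 : ℕ) : ℕ)) * X 0 ^ a * X 1 ^ (b - 2) := by
  simp [Nat.sub_sub]
  ring

lemma choose_add_two_mul (m k : ℕ) :
    m.choose (k + 2) * ((k + 2) * (k + 1)) = m.choose k * ((m - k) * (m - k - 1)) := by
  have h1 := Nat.choose_succ_right_eq m k
  have h2 := Nat.choose_succ_right_eq m (k + 1)
  rw [Nat.sub_sub, ← mul_assoc, ← mul_assoc, h2, ← h1]
  ring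

/-- `P_m` is harmonic: `∂²P_m/∂X² + ∂²P_m/∂Y² = 0`. -/
theorem stmt_14 (m : ℕ) :
    pderiv 0 (pderiv 0 (weilSingularPoly m)) + pderiv 1 (pderiv 1 (weilSingularPoly m))
      = 0 := by
  simp only [weilSingularPoly, map_sum, pderiv_zero_twice, pderiv_one_twice]
  rw [Finset.sum_range_succ, Finset.sum_range_succ' (n := m / 2)]
  -- The exponent `m - 2 * (m / 2)` is `0` or `1`.
  have hlast : (m - 2 * (m / 2)) * (m - 2 * (m / 2) - 1) = 0 := by
    rw [mul_eq_zero]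
    omega
  rw [hlast]
  simp only [Nat.cast_zero, mul_zero, zero_mul, map_zero, add_zero]
  rw [← Finset.sum_add_distrib]
  refine Finset.sum_eq_zero fun i _ => ?_
  have h : (m.choose (2 * (i + 1)) : ℤ) * ((2 * (i + 1) * (2 * (i + 1) - 1) : ℕ) : ℤ)
      = m.choose (2 * i) * (((m - 2 * i) * (m - 2 * i - 1) : ℕ) : ℤ) := by
    exact_mod_cast choose_add_two_mul m (2 * i)
  rw [mul_assoc ((-1) ^ (i + 1)), h, show 2 * (i + 1) - 2 = 2 * i by omega,
    show m - 2 * (i + 1) = m - 2 * i - 2 by omega, mul_assoc ((-1) ^ i), pow_succ]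
  simp only [mul_neg, mul_one, neg_mul, map_neg, add_neg_cancel]
end
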